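/- Let κ be a (P,ρ)-kernel on a locally finite weakly ranked poset (P,ρ), with right and left KLS functions f and g, Z-function Z = g^rev·f, Chow function ℋ, and augmented Chow functions F = ℋ·f^rev and G = g^rev·ℋ. Then for every s ≤ t in P: F_{st}(x) = Z_{st}(x) + Σ_{s<w≤t} (g^rev_{sw}(x) − x·g_{sw}(x))/(x−1)·F_{wt}(x), and G_{st}(x) = Z_{st}(x) + Σ_{s≤w<t} G_{sw}(x)·(f^rev_{wt}(x) − x·f_{wt}(x))/(x−1). -/

import Mathlib

/-!
Evaluating `κ * κ^rev = δ` at `x = 1` shows that the unipotent integer matrix `κ(1)` squares to the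
identity; since `ℤ` has no `2`-torsion, `κ(1) = δ` (`kernel_eval_one`). Hence `x - 1` divides
`κ_{st}` for `s < t`, and the reduced kernel satisfies `(x - 1) κ̄ = κ - x δ` exactly
(`sub_one_mul_red`).

Multiplying by `g` on the left gives `g^rev - x g = (x - 1) g κ̄`, and since `κ̄ ℋ = -δ`,
`(g^rev - x g) ℋ f^rev = -(x - 1) g f^rev = -(x - 1) g κ f = -(x - 1) g^rev f = -(x - 1) Z`.
The term `w = s` of the left-hand convolution is `(1 - x) F_{st}`, which yields the formula for `F`.
Symmetrically, `g^rev ℋ (f^rev - x f) = (x - 1) g^rev ℋ κ̄ f = -(x - 1) Z`, and the term `w = t`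
is `(1 - x) G_{st}`.
-/

open Finset Polynomial
open scoped Classical

noncomputable section

variable {α : Type*}

/-- Convolution product in the incidence algebra of a locally finite poset over `ℤ[x]`.
Only the values on intervals `s ≤ t` are relevant. -/
def conv [PartialOrder α] [LocallyFiniteOrder α] (a b : α → α → Polynomial ℤ) :
    α → α → Polynomial ℤ :=
  fun s t => ∑ w ∈ Finset.Icc s t, a s w * b w t

/-- The identity `δ` of the incidence algebra. -/
def dlt [PartialOrder α] : α → α → Polynomial ℤ :=
  fun s t => if s = t then 1 else 0

/-- The involution `a ↦ a^rev`, given by `(a^rev)_{st}(x) = x^{ρ_{st}} a_{st}(1/x)`. -/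
def rev (ρ : α → α → ℕ) (a : α → α → Polynomial ℤ) : α → α → Polynomial ℤ :=
  fun s t => (a s t).reflect (ρ s t)

/-- A weak rank function on a poset. -/
structure IsWeakRank [Preorder α] (ρ : α → α → ℕ) : Prop where
  pos : ∀ ⦃s t : α⦄, s < t → 0 < ρ s t
  add : ∀ ⦃s w t : α⦄, s ≤ w → w ≤ t → ρ s t = ρ s w + ρ w t

/-- `κ` is a `(P,ρ)`-kernel: it lies in `I_ρ(P)`, is `1` on the diagonal, and `κ⁻¹ = κ^rev`. -/
structure IsKernel [PartialOrder α] [LocallyFiniteOrder α] (ρ : α → α → ℕ)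
    (κ : α → α → Polynomial ℤ) : Prop where
  degLE : ∀ ⦃s t : α⦄, s ≤ t → (κ s t).natDegree ≤ ρ s t
  diag : ∀ s : α, κ s s = 1
  left : ∀ ⦃s t : α⦄, s ≤ t → conv (rev ρ κ) κ s t = dlt s t
  right : ∀ ⦃s t : α⦄, s ≤ t → conv κ (rev ρ κ) s t = dlt s t

/-- The reduced kernel `κ̄`: `κ̄_{st} = κ_{st}/(x-1)` for `s < t` and `κ̄_{ss} = -1`. -/
def red [PartialOrder α] (κ : α → α → Polynomial ℤ) : α → α → Polynomial ℤ :=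
  fun s t => if s = t then -1 else κ s t /ₘ (X - 1)

/-- `H` is the Chow function of `κ`, i.e. `H = -(κ̄)⁻¹`. -/
structure IsChow [PartialOrder α] [LocallyFiniteOrder α] (κ H : α → α → Polynomial ℤ) : Prop where
  left : ∀ ⦃s t : α⦄, s ≤ t → conv (red κ) H s t = -dlt s t
  right : ∀ ⦃s t : α⦄, s ≤ t → conv H (red κ) s t = -dlt s t

/-- `f` is the right KLS function of the kernel `κ`. -/
structure IsRightKLS [PartialOrder α] [LocallyFiniteOrder α] (ρ : α → α → ℕ)
    (κ f : α → α → Polynomial ℤ) : Prop where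
  diag : ∀ s : α, f s s = 1
  degLT : ∀ ⦃s t : α⦄, s < t → 2 * (f s t).natDegree < ρ s t
  rev_eq : ∀ ⦃s t : α⦄, s ≤ t → rev ρ f s t = conv κ f s t

/-- `g` is the left KLS function of the kernel `κ`. -/
structure IsLeftKLS [PartialOrder α] [LocallyFiniteOrder α] (ρ : α → α → ℕ)
    (κ g : α → α → Polynomial ℤ) : Prop where
  diag : ∀ s : α, g s s = 1
  degLT : ∀ ⦃s t : α⦄, s < t → 2 * (g s t).natDegree < ρ s t
  rev_eq : ∀ ⦃s t : α⦄, s ≤ t → rev ρ g s t = conv g κ s t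

/-- `p` is symmetric with center of symmetry `d/2`, i.e. `p(x) = x^d p(1/x)`. -/
def PolySymm (d : ℕ) (p : Polynomial ℤ) : Prop := p.natDegree ≤ d ∧ p.reflect d = p

/-- All coefficients of `p` are non-negative. -/
def PolyNonneg (p : Polynomial ℤ) : Prop := ∀ n, 0 ≤ p.coeff n

/-- The coefficient sequence of `p` is unimodal. -/
def PolyUnimodal (p : Polynomial ℤ) : Prop :=
  ∃ j, (∀ i < j, p.coeff i ≤ p.coeff (i + 1)) ∧ ∀ i, j ≤ i → p.coeff (i + 1) ≤ p.coeff i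

end

section IncidenceAlgebra

variable {α : Type*} [PartialOrder α] [LocallyFiniteOrder α]

lemma conv_congr {a a' b b' : α → α → Polynomial ℤ} {s t : α}
    (ha : ∀ w, s ≤ w → w ≤ t → a s w = a' s w) (hb : ∀ w, s ≤ w → w ≤ t → b w t = b' w t) :
    conv a b s t = conv a' b' s t := by
  unfold conv
  refine Finset.sum_congr rfl fun w hw => ?_
  rw [Finset.mem_Icc] at hw
  rw [ha w hw.1 hw.2, hb w hw.1 hw.2]

lemma conv_assoc (a b c : α → α → Polynomial ℤ) (s t : α) :
    conv (conv a b) c s t = conv a (conv b c) s t := by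
  simp only [conv, Finset.sum_mul, Finset.mul_sum, mul_assoc]
  refine Finset.sum_comm' fun x y => ?_
  simp only [Finset.mem_Icc]
  constructor
  · rintro ⟨⟨_, h2⟩, h3, h4⟩
    exact ⟨⟨h4, h2⟩, h3, h4.trans h2⟩
  · rintro ⟨⟨h1, h2⟩, h3, _⟩
    exact ⟨⟨h3.trans h1, h2⟩, h3, h1⟩

lemma conv_dlt (a : α → α → Polynomial ℤ) {s t : α} (hst : s ≤ t) : conv a dlt s t = a s t := by
  simp [conv, dlt, hst]

lemma dlt_conv (a : α → α → Polynomial ℤ) {s t : α} (hst : s ≤ t) : conv dlt a s t = a s t := by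
  simp [conv, dlt, hst]

lemma eval_one_reflect (p : Polynomial ℤ) {n : ℕ} (h : p.natDegree ≤ n) :
    (p.reflect n).eval 1 = p.eval 1 := by
  let _ : Invertible (1 : ℤ) := invertibleOne
  have := Polynomial.eval₂_reflect_mul_pow (RingHom.id ℤ) (1 : ℤ) n p h
  simpa [Polynomial.eval₂_id] using this

/-- A kernel specializes to `δ` at `x = 1`: by induction on the interval, the equation
`κ(1) * κ(1) = δ` reduces to `2 κ_{st}(1) = 0`. -/
lemma kernel_eval_one {ρ : α → α → ℕ} {κ : α → α → Polynomial ℤ} (hκ : IsKernel ρ κ) :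
    ∀ (n : ℕ) {s t : α}, (Finset.Icc s t).card = n → s < t → (κ s t).eval 1 = 0 := by
  intro n
  induction n using Nat.strong_induction_on with
  | _ n ih =>
    intro s t hn hst
    have h := congrArg (Polynomial.eval 1) (hκ.right hst.le)
    simp only [conv, dlt, if_neg hst.ne, Polynomial.eval_finsetSum, Polynomial.eval_mul,
      Polynomial.eval_zero] at h
    have h2 : ∑ w ∈ Finset.Icc s t, (κ s w).eval 1 * (rev ρ κ w t).eval 1
        = ∑ w ∈ ({s, t} : Finset α), (κ s w).eval 1 * (rev ρ κ w t).eval 1 := by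
      symm
      refine Finset.sum_subset ?_ fun w hw hw' => ?_
      · intro w hw
        simp only [Finset.mem_insert, Finset.mem_singleton] at hw
        rcases hw with rfl | rfl <;> simp [hst.le]
      · simp only [Finset.mem_insert, Finset.mem_singleton, not_or] at hw'
        rw [Finset.mem_Icc] at hw
        have hwt : w < t := lt_of_le_of_ne hw.2 hw'.2
        rw [ih _ (hn ▸ Finset.card_lt_card
          (Finset.Icc_ssubset_Icc_right hst.le le_rfl hwt)) rfl
          (lt_of_le_of_ne hw.1 (Ne.symm hw'.1)), zero_mul]
    rw [h2, Finset.sum_pair hst.ne] at h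
    simp only [rev] at h
    rw [eval_one_reflect _ (hκ.degLE hst.le), eval_one_reflect _ (hκ.degLE le_rfl),
      hκ.diag, hκ.diag] at h
    simp only [Polynomial.eval_one] at h
    linarith

/-- The division by `x - 1` in the definition of the reduced kernel is exact. -/
lemma sub_one_mul_red {ρ : α → α → ℕ} {κ : α → α → Polynomial ℤ} (hκ : IsKernel ρ κ) {s t : α}
    (hst : s ≤ t) : (X - 1) * red κ s t = κ s t - X * dlt s t := by
  rcases eq_or_lt_of_le hst with rfl | h
  · simp [red, dlt, hκ.diag]
  · have hroot : (κ s t).IsRoot 1 := kernel_eval_one hκ _ rfl h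
    have := Polynomial.mul_divByMonic_eq_iff_isRoot.mpr hroot
    rw [Polynomial.C_1] at this
    simp [red, dlt, h.ne, this]

lemma left_factor {ρ : α → α → ℕ} {κ g : α → α → Polynomial ℤ} (hκ : IsKernel ρ κ)
    (hg : IsLeftKLS ρ κ g) {s t : α} (hst : s ≤ t) :
    rev ρ g s t - X * g s t = (X - 1) * conv g (red κ) s t := by
  have h1 : (X - 1) * conv g (red κ) s t
      = ∑ w ∈ Finset.Icc s t, (g s w * κ w t - X * (g s w * dlt w t)) := by
    rw [conv, Finset.mul_sum]
    refine Finset.sum_congr rfl fun w hw => ?_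
    rw [mul_left_comm, sub_one_mul_red hκ (Finset.mem_Icc.mp hw).2]
    ring
  rw [h1, Finset.sum_sub_distrib, ← Finset.mul_sum, hg.rev_eq hst]
  change _ = conv g κ s t - X * conv g dlt s t
  rw [conv_dlt g hst]

lemma right_factor {ρ : α → α → ℕ} {κ f : α → α → Polynomial ℤ} (hκ : IsKernel ρ κ)
    (hf : IsRightKLS ρ κ f) {s t : α} (hst : s ≤ t) :
    rev ρ f s t - X * f s t = (X - 1) * conv (red κ) f s t := by
  have h1 : (X - 1) * conv (red κ) f s t
      = ∑ w ∈ Finset.Icc s t, (κ s w * f w t - X * (dlt s w * f w t)) := by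
    rw [conv, Finset.mul_sum]
    refine Finset.sum_congr rfl fun w hw => ?_
    rw [← mul_assoc, sub_one_mul_red hκ (Finset.mem_Icc.mp hw).1]
    ring
  rw [h1, Finset.sum_sub_distrib, ← Finset.mul_sum, hf.rev_eq hst]
  change _ = conv κ f s t - X * conv dlt f s t
  rw [dlt_conv f hst]

lemma neg_dlt_conv (a : α → α → Polynomial ℤ) {s t : α} (hst : s ≤ t) :
    conv (fun u v => -dlt u v) a s t = -a s t := by
  rw [← dlt_conv a hst]
  simp [conv]

/-- Both sides equal `g κ f`; they are the two expressions for the `Z`-function. -/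
lemma conv_rev_right_eq_conv_rev_left {ρ : α → α → ℕ} {κ f g : α → α → Polynomial ℤ}
    (hf : IsRightKLS ρ κ f) (hg : IsLeftKLS ρ κ g) (s t : α) :
    conv g (rev ρ f) s t = conv (rev ρ g) f s t := by
  rw [conv_congr (a' := g) (b' := conv κ f) (fun _ _ _ => rfl) (fun w _ h => hf.rev_eq h),
    ← conv_assoc]
  exact conv_congr (fun w h _ => (hg.rev_eq h).symm) (fun _ _ _ => rfl)

/-- `κ̄ ℋ = -δ` in a convolution with arbitrary outer factors. -/
lemma conv_red_chow {κ H : α → α → Polynomial ℤ} (hH : IsChow κ H)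
    (a b : α → α → Polynomial ℤ) (s t : α) :
    conv (conv a (red κ)) (conv H b) s t = -conv a b s t := by
  rw [conv_assoc, conv_congr (a' := a) (b' := fun u v => -b u v) (fun _ _ _ => rfl)]
  · simp [conv]
  · intro w _ h
    rw [← conv_assoc, conv_congr (a' := fun u v => -dlt u v) (b' := b)
      (fun v h _ => hH.left h) (fun _ _ _ => rfl), neg_dlt_conv b h]

/-- `ℋ κ̄ = -δ` in a convolution with arbitrary outer factors. -/
lemma conv_chow_red {κ H : α → α → Polynomial ℤ} (hH : IsChow κ H)
    (a b : α → α → Polynomial ℤ) (s t : α) :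
    conv (conv a H) (conv (red κ) b) s t = -conv a b s t := by
  rw [conv_assoc, conv_congr (a' := a) (b' := fun u v => -b u v) (fun _ _ _ => rfl)]
  · simp [conv]
  · intro w _ h
    rw [← conv_assoc, conv_congr (a' := fun u v => -dlt u v) (b' := b)
      (fun v h _ => hH.right h) (fun _ _ _ => rfl), neg_dlt_conv b h]

end IncidenceAlgebra

/-- Theorem 3.16 (augmented numerical canonical decomposition): with `Z = g^rev·f`,
`F = ℋ·f^rev` and `G = g^rev·ℋ`, for every `s ≤ t`:
`F_{st} = Z_{st} + Σ_{s<w≤t} (g^rev_{sw} - x g_{sw})/(x-1) · F_{wt}` and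
`G_{st} = Z_{st} + Σ_{s≤w<t} G_{sw} · (f^rev_{wt} - x f_{wt})/(x-1)`.
(The identities are stated after clearing the denominator `x - 1`.) -/
theorem augmented_numerical_canonical_decomposition [PartialOrder α] [LocallyFiniteOrder α]
    (ρ : α → α → ℕ) (hρ : IsWeakRank ρ)
    (κ : α → α → Polynomial ℤ) (hκ : IsKernel ρ κ)
    (H : α → α → Polynomial ℤ) (hH : IsChow κ H)
    (f : α → α → Polynomial ℤ) (hf : IsRightKLS ρ κ f)
    (g : α → α → Polynomial ℤ) (hg : IsLeftKLS ρ κ g)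
    (s t : α) (hst : s ≤ t) :
    (X - 1) * conv H (rev ρ f) s t
        = (X - 1) * conv (rev ρ g) f s t
          + ∑ w ∈ Finset.Ioc s t, (rev ρ g s w - X * g s w) * conv H (rev ρ f) w t ∧
    (X - 1) * conv (rev ρ g) H s t
        = (X - 1) * conv (rev ρ g) f s t
          + ∑ w ∈ Finset.Ico s t, conv (rev ρ g) H s w * (rev ρ f w t - X * f w t) := by
  have hgs : rev ρ g s s = 1 := by rw [hg.rev_eq le_rfl]; simp [conv, hg.diag, hκ.diag]
  have hft : rev ρ f t t = 1 := by rw [hf.rev_eq le_rfl]; simp [conv, hf.diag, hκ.diag]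
  constructor
  · have key : ∑ w ∈ Finset.Icc s t, (rev ρ g s w - X * g s w) * conv H (rev ρ f) w t
        = -((X - 1) * conv (rev ρ g) f s t) := by
      rw [← conv_rev_right_eq_conv_rev_left hf hg, ← mul_neg, ← conv_red_chow hH, conv,
        Finset.mul_sum]
      refine Finset.sum_congr rfl fun w hw => ?_
      rw [left_factor hκ hg (Finset.mem_Icc.mp hw).1, mul_assoc]
    rw [← Finset.Ioc_insert_left hst, Finset.sum_insert Finset.left_notMem_Ioc, hgs,
      hg.diag] at key
    linear_combination -key
  · have key : ∑ w ∈ Finset.Icc s t, conv (rev ρ g) H s w * (rev ρ f w t - X * f w t)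
        = -((X - 1) * conv (rev ρ g) f s t) := by
      rw [← mul_neg, ← conv_chow_red hH, conv, Finset.mul_sum]
      refine Finset.sum_congr rfl fun w hw => ?_
      rw [right_factor hκ hf (Finset.mem_Icc.mp hw).2, mul_left_comm]
    rw [← Finset.Ico_insert_right hst, Finset.sum_insert Finset.right_notMem_Ico, hft,
      hf.diag] at key
    linear_combination -key
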